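/- arXiv:1512.09006 — 2 statements merged into one kernel-verified Lean document; each statement's English description precedes it below -/
import Mathlib

section
/- There exists an absolute constant c > 0 such that for every finite set W of k positive real numbers, the rational function f(x,y) = (x − y)² / (1 + y²) attains at least c · k^{4/3} distinct values on W × W; that is, |{ (x − y)² / (1 + y²) : x, y ∈ W }| ≥ c · k^{4/3}. -/
noncomputable def gfun (p : ℝ × ℝ) : ℝ := (p.1 - p.2) / Real.sqrt (1 + p.2 ^ 2)

theorem sqrt_pos_aux (y : ℝ) : 0 < Real.sqrt (1 + y ^ 2) := Real.sqrt_pos.mpr (by positivity)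

theorem line_eq {x y x' y' : ℝ} (h : gfun (x, y) = gfun (x', y')) :
    x' = y' + (Real.sqrt (1 + y' ^ 2) / Real.sqrt (1 + y ^ 2)) * (x - y) := by
  have h1 := sqrt_pos_aux y
  have h2 := sqrt_pos_aux y'
  simp only [gfun] at h
  rw [div_eq_div_iff h1.ne' h2.ne'] at h
  field_simp
  linarith

theorem alg_unique {m b y y' z z' : ℝ} (hm : 0 < m) (h1 : y' = m * y + b) (h2 : z' = m * z + b)
    (e1 : 1 + y' ^ 2 = m ^ 2 * (1 + y ^ 2)) (e2 : 1 + z' ^ 2 = m ^ 2 * (1 + z ^ 2))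
    (hy : y ≠ y') : y = z ∧ y' = z' := by
  subst h1 h2
  have hb : b ≠ 0 := by
    rintro rfl
    have : (m - 1) * (m + 1) = 0 := by nlinarith
    rcases mul_eq_zero.mp this with h | h
    · apply hy
      have : m = 1 := by linarith
      subst this; ring
    · linarith
  have : (m * b) * (y - z) = 0 := by nlinarith
  rcases mul_eq_zero.mp this with h | h
  · exact absurd h (mul_ne_zero hm.ne' hb)
  · have : y = z := by linarith
    subst this; exact ⟨rfl, rfl⟩

theorem line_unique {a a' d d' y y' z z' : ℝ} (hne : (a, a') ≠ (d, d'))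
    (h1 : gfun (a, y) = gfun (a', y')) (h2 : gfun (d, y) = gfun (d', y'))
    (h3 : gfun (a, z) = gfun (a', z')) (h4 : gfun (d, z) = gfun (d', z'))
    (hy : y ≠ y') : y = z ∧ y' = z' := by
  have k1 := line_eq h1
  have k2 := line_eq h2
  have k3 := line_eq h3
  have k4 := line_eq h4
  have m1 : Real.sqrt (1 + y' ^ 2) ^ 2
      = (Real.sqrt (1 + y' ^ 2) / Real.sqrt (1 + y ^ 2)) ^ 2 * Real.sqrt (1 + y ^ 2) ^ 2 := by
    have := sqrt_pos_aux y
    field_simp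
  have m2 : Real.sqrt (1 + z' ^ 2) ^ 2
      = (Real.sqrt (1 + z' ^ 2) / Real.sqrt (1 + z ^ 2)) ^ 2 * Real.sqrt (1 + z ^ 2) ^ 2 := by
    have := sqrt_pos_aux z
    field_simp
  rw [Real.sq_sqrt (by positivity), Real.sq_sqrt (by positivity)] at m1 m2
  have hm : 0 < Real.sqrt (1 + y' ^ 2) / Real.sqrt (1 + y ^ 2) :=
    div_pos (sqrt_pos_aux _) (sqrt_pos_aux _)
  generalize Real.sqrt (1 + y' ^ 2) / Real.sqrt (1 + y ^ 2) = m at *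
  generalize Real.sqrt (1 + z' ^ 2) / Real.sqrt (1 + z ^ 2) = n at *
  have had : a - d ≠ 0 := by
    intro h
    have h' : a = d := by linarith
    subst h'
    exact hne (by rw [k1, k2])
  have hmn : n = m := by
    have : (a - d) * (n - m) = 0 := by linarith
    rcases mul_eq_zero.mp this with h | h
    · exact absurd h had
    · linarith
  subst hmn
  exact alg_unique (b := a' - n * a) hm (by linarith) (by linarith) m1 m2 hy

theorem card_le_image_add {α : Type*} [DecidableEq α] (S : Finset α) (h : α → ℕ) :
    S.card ≤ (S.image h).card + (S.offDiag.filter (fun p => h p.1 = h p.2)).card := by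
  induction S using Finset.induction_on with
  | empty => simp
  | insert a S ha ih =>
    rw [Finset.card_insert_of_notMem ha]
    have hsub : S.offDiag.filter (fun p => h p.1 = h p.2) ⊆
        (insert a S).offDiag.filter (fun p => h p.1 = h p.2) :=
      Finset.filter_subset_filter _ (Finset.offDiag_mono (Finset.subset_insert _ _))
    by_cases hi : h a ∈ S.image h
    · obtain ⟨q, hq, hqa⟩ := Finset.mem_image.mp hi
      have : (S.offDiag.filter (fun p => h p.1 = h p.2)).card <
          ((insert a S).offDiag.filter (fun p => h p.1 = h p.2)).card := by
        apply Finset.card_lt_card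
        refine (Finset.ssubset_iff_of_subset hsub).mpr ⟨(a, q), ?_, ?_⟩
        · simp only [Finset.mem_filter, Finset.mem_offDiag]
          refine ⟨⟨Finset.mem_insert_self _ _, Finset.mem_insert_of_mem hq, ?_⟩, hqa.symm⟩
          rintro rfl; exact ha hq
        · simp [ha]
      rw [Finset.image_insert, Finset.insert_eq_of_mem hi]
      omega
    · rw [Finset.image_insert, Finset.card_insert_of_notMem hi]
      have := Finset.card_le_card hsub
      omega

theorem energy_cs {α : Type*} [DecidableEq α] (P : Finset α) (g : α → ℝ) :
    P.card ^ 2 ≤ (P.image g).card * ((P ×ˢ P).filter (fun p => g p.1 = g p.2)).card := by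
  have h1 : P.card = ∑ v ∈ P.image g, (P.filter (fun a => g a = v)).card :=
    Finset.card_eq_sum_card_image g P
  have h2 : ((P ×ˢ P).filter (fun p => g p.1 = g p.2)).card
      = ∑ v ∈ P.image g, (P.filter (fun a => g a = v)).card ^ 2 := by
    rw [Finset.card_eq_sum_card_fiberwise (f := fun p : α × α => g p.1) (t := P.image g)]
    · apply Finset.sum_congr rfl
      intro v hv
      rw [sq, ← Finset.card_product]
      congr 1
      ext ⟨a, b⟩
      simp only [Finset.mem_filter, Finset.mem_product]
      constructor
      · rintro ⟨⟨⟨h1, h2⟩, h3⟩, h4⟩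
        exact ⟨⟨h1, h4⟩, h2, h3 ▸ h4⟩
      · rintro ⟨⟨h1, h4⟩, h2, h5⟩
        exact ⟨⟨⟨h1, h2⟩, h4.trans h5.symm⟩, h4⟩
    · intro p hp
      simp only [Finset.coe_filter, Finset.mem_product, Set.mem_setOf_eq] at hp
      exact Finset.mem_coe.mpr (Finset.mem_image_of_mem g hp.1.1)
  rw [h2]
  conv_lhs => rw [h1]
  exact sq_sum_le_card_mul_sum_sq

noncomputable def rk (W : Finset ℝ) (x : ℝ) : ℕ := (W.filter (· < x)).card

theorem rk_mono (W : Finset ℝ) : Monotone (rk W) := by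
  intro x y h
  apply Finset.card_le_card
  intro w
  simp only [Finset.mem_filter]
  exact fun hw => ⟨hw.1, hw.2.trans_le h⟩

theorem rk_lt (W : Finset ℝ) {x y : ℝ} (hx : x ∈ W) (h : x < y) : rk W x < rk W y := by
  apply Finset.card_lt_card
  refine (Finset.ssubset_iff_of_subset ?_).mpr ⟨x, by simp [hx, h], by simp⟩
  intro w
  simp only [Finset.mem_filter]
  exact fun hw => ⟨hw.1, hw.2.trans h⟩

theorem rk_inj (W : Finset ℝ) {x y : ℝ} (hx : x ∈ W) (hy : y ∈ W) (h : rk W x = rk W y) :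
    x = y := by
  rcases lt_trichotomy x y with h' | h' | h'
  · have := rk_lt W hx h'; omega
  · exact h'
  · have := rk_lt W hy h'; omega

theorem rk_le (W : Finset ℝ) (x : ℝ) : rk W x ≤ W.card := Finset.card_filter_le _ _

theorem block_card (W : Finset ℝ) (B i : ℕ) (hB : 0 < B) :
    (W.filter (fun x => rk W x / B = i)).card ≤ B := by
  have : (W.filter (fun x => rk W x / B = i)).card ≤ (Finset.Ico (i * B) (i * B + B)).card := by
    apply Finset.card_le_card_of_injOn (rk W)
    · intro x hx
      have hx' := (Finset.mem_filter.mp (Finset.mem_coe.mp hx)).2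
      rw [Nat.div_eq_iff hB] at hx'
      simp only [Finset.coe_Ico, Set.mem_Ico]
      omega
    · intro x hx y hy h
      exact rk_inj W (Finset.mem_filter.mp (Finset.mem_coe.mp hx)).1
        (Finset.mem_filter.mp (Finset.mem_coe.mp hy)).1 h
  simpa using this

/-- The points of the grid on the line of the pair `l`. -/
noncomputable def lineSet (W : Finset ℝ) (l : ℝ × ℝ) : Finset (ℝ × ℝ) :=
  (W ×ˢ W).filter (fun p => gfun (p.1, l.1) = gfun (p.2, l.2))

noncomputable def closePairs (W : Finset ℝ) (B : ℕ) : Finset ((ℝ × ℝ) × (ℝ × ℝ)) :=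
  ((W ×ˢ W) ×ˢ (W ×ˢ W)).filter
    (fun q => rk W q.2.1 / B = rk W q.1.1 / B ∧ rk W q.2.2 / B = rk W q.1.2 / B)

theorem line_mono {x y x' y' w w' : ℝ} (h : gfun (x, y) = gfun (x', y'))
    (h' : gfun (w, y) = gfun (w', y')) (hx : x ≤ w) : x' ≤ w' := by
  rw [line_eq h, line_eq h']
  have hm : 0 < Real.sqrt (1 + y' ^ 2) / Real.sqrt (1 + y ^ 2) :=
    div_pos (sqrt_pos_aux _) (sqrt_pos_aux _)
  have := mul_le_mul_of_nonneg_left (sub_le_sub_right hx y) hm.le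
  linarith

theorem closePairs_card (W : Finset ℝ) (B : ℕ) (hB : 0 < B) :
    (closePairs W B).card ≤ W.card ^ 2 * B ^ 2 := by
  have hs : closePairs W B ⊆ (W ×ˢ W).biUnion (fun p => ({p} : Finset (ℝ × ℝ)) ×ˢ
      ((W.filter (fun x => rk W x / B = rk W p.1 / B)) ×ˢ
       (W.filter (fun x => rk W x / B = rk W p.2 / B)))) := by
    rintro ⟨p, q⟩ h
    simp only [closePairs, Finset.mem_filter, Finset.mem_product] at h
    simp only [Finset.mem_biUnion, Finset.mem_product, Finset.mem_singleton, Finset.mem_filter]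
    exact ⟨p, h.1.1, rfl, ⟨h.1.2.1, h.2.1⟩, h.1.2.2, h.2.2⟩
  refine (Finset.card_le_card hs).trans ((Finset.card_biUnion_le_card_mul _ _ (B ^ 2) ?_).trans ?_)
  · intro p _
    rw [Finset.card_product, Finset.card_product, Finset.card_singleton, one_mul, sq]
    exact Nat.mul_le_mul (block_card W B _ hB) (block_card W B _ hB)
  · rw [Finset.card_product, sq W.card]

theorem lineSet_card (W : Finset ℝ) (B : ℕ) (l : ℝ × ℝ) :
    (lineSet W l).card ≤ (2 * (W.card / B) + 1) +
      ((closePairs W B).filter (fun q => q.1 ≠ q.2 ∧ q.1 ∈ lineSet W l ∧ q.2 ∈ lineSet W l)).card := by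
  refine (card_le_image_add (lineSet W l) (fun p => rk W p.1 / B + rk W p.2 / B)).trans ?_
  apply Nat.add_le_add
  · have : ((lineSet W l).image (fun p => rk W p.1 / B + rk W p.2 / B)) ⊆
        Finset.range (2 * (W.card / B) + 1) := by
      intro n hn
      obtain ⟨p, _, rfl⟩ := Finset.mem_image.mp hn
      have h1 : rk W p.1 / B ≤ W.card / B := Nat.div_le_div_right (rk_le W p.1)
      have h2 : rk W p.2 / B ≤ W.card / B := Nat.div_le_div_right (rk_le W p.2)
      simp only [Finset.mem_range]
      omega
    simpa using Finset.card_le_card this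
  · apply Finset.card_le_card
    rintro ⟨p, q⟩ h
    simp only [Finset.mem_filter, Finset.mem_offDiag] at h
    obtain ⟨⟨hp, hq, hne⟩, he⟩ := h
    have hp' := hp
    have hq' := hq
    simp only [lineSet, Finset.mem_filter] at hp' hq'
    simp only [Finset.mem_filter, closePairs, Finset.mem_product]
    refine ⟨⟨⟨Finset.mem_product.mp hp'.1, Finset.mem_product.mp hq'.1⟩, ?_⟩, hne, hp, hq⟩
    rcases le_total p.1 q.1 with h | h
    · have h2 := line_mono hp'.2 hq'.2 h
      have a1 : rk W p.1 / B ≤ rk W q.1 / B := Nat.div_le_div_right (rk_mono W h)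
      have a2 : rk W p.2 / B ≤ rk W q.2 / B := Nat.div_le_div_right (rk_mono W h2)
      omega
    · have h2 := line_mono hq'.2 hp'.2 h
      have a1 : rk W q.1 / B ≤ rk W p.1 / B := Nat.div_le_div_right (rk_mono W h)
      have a2 : rk W q.2 / B ≤ rk W p.2 / B := Nat.div_le_div_right (rk_mono W h2)
      omega

theorem lineSet_diag (W : Finset ℝ) (y : ℝ) : (lineSet W (y, y)).card ≤ W.card := by
  apply Finset.card_le_card_of_injOn Prod.fst
  · intro p hp
    simp only [lineSet, Finset.coe_filter, Finset.mem_product, Set.mem_setOf_eq] at hp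
    exact hp.1.1
  · intro p hp q hq h
    simp only [lineSet, Finset.coe_filter, Finset.mem_product, Set.mem_setOf_eq] at hp hq
    have h1 := line_eq hp.2
    have h2 := line_eq hq.2
    exact Prod.ext h (by rw [h1, h2, h])

theorem sum_close (W : Finset ℝ) (B : ℕ) :
    ∑ l ∈ W.offDiag, ((closePairs W B).filter
      (fun q => q.1 ≠ q.2 ∧ q.1 ∈ lineSet W l ∧ q.2 ∈ lineSet W l)).card
      ≤ (closePairs W B).card := by
  rw [← Finset.card_biUnion]
  · apply Finset.card_le_card
    intro q hq
    obtain ⟨l, _, h⟩ := Finset.mem_biUnion.mp hq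
    exact (Finset.mem_filter.mp h).1
  · intro l hl l' hl' hne
    rw [Function.onFun, Finset.disjoint_left]
    rintro q h h'
    simp only [Finset.mem_filter, lineSet] at h h'
    apply hne
    have := line_unique (a := q.1.1) (a' := q.1.2) (d := q.2.1) (d' := q.2.2) h.2.1
      h.2.2.1.2 h.2.2.2.2 h'.2.2.1.2 h'.2.2.2.2 (Finset.mem_offDiag.mp (Finset.mem_coe.mp hl)).2.2
    exact Prod.ext this.1 this.2

theorem energy_le (W : Finset ℝ) (B : ℕ) (hB : 0 < B) :
    (((W ×ˢ W) ×ˢ (W ×ˢ W)).filter (fun p => gfun p.1 = gfun p.2)).card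
      ≤ W.card ^ 2 + W.card ^ 2 * (2 * (W.card / B) + 1) + W.card ^ 2 * B ^ 2 := by
  have h1 : (((W ×ˢ W) ×ˢ (W ×ˢ W)).filter (fun p => gfun p.1 = gfun p.2)).card
      ≤ ∑ l ∈ W ×ˢ W, (lineSet W l).card := by
    rw [Finset.card_eq_sum_card_fiberwise
      (f := fun p : (ℝ × ℝ) × (ℝ × ℝ) => (p.1.2, p.2.2)) (t := W ×ˢ W)]
    · apply Finset.sum_le_sum
      intro l _
      apply Finset.card_le_card_of_injOn (fun p => (p.1.1, p.2.1))
      · rintro ⟨⟨a, b⟩, ⟨c, d⟩⟩ hp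
        simp only [Finset.coe_filter, Finset.mem_filter, Finset.mem_product,
          Set.mem_setOf_eq] at hp
        obtain ⟨⟨⟨⟨ha, hb⟩, hc, hd⟩, he⟩, rfl⟩ := hp
        simp only [lineSet, Finset.coe_filter, Finset.mem_product, Set.mem_setOf_eq]
        exact ⟨⟨ha, hc⟩, he⟩
      · rintro ⟨⟨a, b⟩, ⟨c, d⟩⟩ hp ⟨⟨a', b'⟩, ⟨c', d'⟩⟩ hp' h
        have e1 := (Finset.mem_filter.mp (Finset.mem_coe.mp hp)).2
        have e2 := (Finset.mem_filter.mp (Finset.mem_coe.mp hp')).2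
        have e3 := e1.trans e2.symm
        simp only [Prod.mk.injEq] at e3 h ⊢
        tauto
    · rintro ⟨⟨a, b⟩, ⟨c, d⟩⟩ hp
      simp only [Finset.coe_filter, Finset.mem_product, Set.mem_setOf_eq] at hp
      exact Finset.mem_coe.mpr (Finset.mem_product.mpr ⟨hp.1.1.2, hp.1.2.2⟩)
  refine h1.trans ?_
  rw [← Finset.diag_union_offDiag, Finset.sum_union (Finset.disjoint_diag_offDiag W), add_assoc]
  apply Nat.add_le_add
  · refine (Finset.sum_le_card_nsmul _ _ W.card ?_).trans ?_
    · rintro ⟨y, y'⟩ h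
      obtain ⟨_, h⟩ := Finset.mem_diag.mp h
      simp only at h
      subst h
      exact lineSet_diag W y
    · rw [Finset.diag_card, smul_eq_mul, sq]
  · refine (Finset.sum_le_sum (fun l _ => lineSet_card W B l)).trans ?_
    rw [Finset.sum_add_distrib]
    apply Nat.add_le_add
    · rw [Finset.sum_const, smul_eq_mul]
      apply Nat.mul_le_mul_right
      rw [Finset.offDiag_card, sq]
      exact Nat.sub_le _ _
    · exact (sum_close W B).trans (closePairs_card W B hB)

theorem image_le (W : Finset ℝ) :
    ((W ×ˢ W).image gfun).card ≤
      2 * ({v : ℝ | ∃ x ∈ W, ∃ y ∈ W, v = (x - y) ^ 2 / (1 + y ^ 2)}).ncard := by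
  classical
  have hV : {v : ℝ | ∃ x ∈ W, ∃ y ∈ W, v = (x - y) ^ 2 / (1 + y ^ 2)} =
      (((W ×ˢ W).image (fun p => (p.1 - p.2) ^ 2 / (1 + p.2 ^ 2)) : Finset ℝ) : Set ℝ) := by
    ext v
    simp only [Set.mem_setOf_eq, Finset.coe_image, Set.mem_image, Finset.mem_coe,
      Finset.mem_product, Prod.exists]
    constructor
    · rintro ⟨x, hx, y, hy, rfl⟩; exact ⟨x, y, ⟨hx, hy⟩, rfl⟩
    · rintro ⟨x, y, ⟨hx, hy⟩, rfl⟩; exact ⟨x, hx, y, hy, rfl⟩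
  rw [hV, Set.ncard_coe_finset]
  set V := (W ×ˢ W).image (fun p => (p.1 - p.2) ^ 2 / (1 + p.2 ^ 2)) with hVd
  have hs : (W ×ˢ W).image gfun ⊆ V.image Real.sqrt ∪ V.image (fun v => - Real.sqrt v) := by
    intro u hu
    obtain ⟨p, hp, rfl⟩ := Finset.mem_image.mp hu
    have hm : (p.1 - p.2) ^ 2 / (1 + p.2 ^ 2) ∈ V := Finset.mem_image_of_mem _ hp
    have hsq : Real.sqrt ((p.1 - p.2) ^ 2 / (1 + p.2 ^ 2)) = |gfun p| := by
      rw [← Real.sqrt_sq_eq_abs]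
      congr 1
      rw [gfun, div_pow, Real.sq_sqrt (by positivity)]
    rw [Finset.mem_union]
    rcases abs_choice (gfun p) with h | h
    · left
      exact Finset.mem_image.mpr ⟨_, hm, hsq.trans h⟩
    · right
      exact Finset.mem_image.mpr ⟨_, hm, by rw [hsq, h, neg_neg]⟩
  have := (Finset.card_le_card hs).trans (Finset.card_union_le _ _)
  have h1 : (V.image Real.sqrt).card ≤ V.card := Finset.card_image_le
  have h2 : (V.image (fun v => - Real.sqrt v)).card ≤ V.card := Finset.card_image_le
  omega

theorem expander_rational_function :
    ∃ c : ℝ, 0 < c ∧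
      ∀ (k : ℕ) (W : Finset ℝ), W.card = k → (∀ x ∈ W, 0 < x) →
        c * (k : ℝ) ^ ((4 : ℝ) / 3) ≤
          (({v : ℝ | ∃ x ∈ W, ∃ y ∈ W, v = (x - y) ^ 2 / (1 + y ^ 2)}).ncard : ℝ) := by
  refine ⟨1 / 16, by norm_num, ?_⟩
  intro k W hk _
  rcases Nat.eq_zero_or_pos k with h0 | hpos
  · rw [h0, Nat.cast_zero, Real.zero_rpow (by norm_num), mul_zero]
    positivity
  have h1 := image_le W
  generalize ({v : ℝ | ∃ x ∈ W, ∃ y ∈ W, v = (x - y) ^ 2 / (1 + y ^ 2)}).ncard = V at *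
  have hk1 : (1 : ℝ) ≤ k := by exact_mod_cast hpos
  obtain ⟨a, ha⟩ : ∃ a : ℝ, a = (k : ℝ) ^ ((1 : ℝ) / 3) := ⟨_, rfl⟩
  have ha1 : 1 ≤ a := by rw [ha]; exact Real.one_le_rpow hk1 (by norm_num)
  have ha3 : (k : ℝ) = a ^ 3 := by
    rw [ha, ← Real.rpow_natCast, ← Real.rpow_mul (by positivity)]; norm_num
  have ha4 : (k : ℝ) ^ ((4 : ℝ) / 3) = a ^ 4 := by
    rw [ha, ← Real.rpow_natCast, ← Real.rpow_mul (by positivity)]; norm_num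
  have hB : 0 < ⌈a⌉₊ := Nat.ceil_pos.mpr (by linarith)
  have hBa : a ≤ (⌈a⌉₊ : ℝ) := Nat.le_ceil a
  have hB2 : (⌈a⌉₊ : ℝ) ≤ 2 * a := by
    have := Nat.ceil_lt_add_one (show 0 ≤ a by linarith)
    linarith
  have h2 := energy_cs (W ×ˢ W) gfun
  have h3 := energy_le W ⌈a⌉₊ hB
  rw [Finset.card_product, hk] at h2
  rw [hk] at h3
  have h4 : (k * k) ^ 2 ≤ (2 * V) * (k ^ 2 + k ^ 2 * (2 * (k / ⌈a⌉₊) + 1) + k ^ 2 * ⌈a⌉₊ ^ 2) :=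
    h2.trans (Nat.mul_le_mul h1 h3)
  have hT : ((k / ⌈a⌉₊ : ℕ) : ℝ) ≤ a ^ 2 := by
    refine Nat.cast_div_le.trans ?_
    rw [div_le_iff₀ (by linarith), ha3]
    nlinarith [sq_nonneg a]
  have h5 : ((k : ℝ) * k) ^ 2 ≤ (2 * V) * ((k : ℝ) ^ 2 + k ^ 2 * (2 * ((k / ⌈a⌉₊ : ℕ) : ℝ) + 1)
      + k ^ 2 * (⌈a⌉₊ : ℝ) ^ 2) := by exact_mod_cast h4
  generalize ((k / ⌈a⌉₊ : ℕ) : ℝ) = T at *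
  generalize (⌈a⌉₊ : ℝ) = B at *
  have hV0 : (0 : ℝ) ≤ V := by positivity
  have hb : (k : ℝ) ^ 2 + k ^ 2 * (2 * T + 1) + k ^ 2 * B ^ 2 ≤ k ^ 2 * (8 * a ^ 2) := by
    have : 1 + (2 * T + 1) + B ^ 2 ≤ 8 * a ^ 2 := by nlinarith
    have := mul_le_mul_of_nonneg_left this (sq_nonneg (k : ℝ))
    linarith
  have h6 := h5.trans (mul_le_mul_of_nonneg_left hb (by positivity : (0 : ℝ) ≤ 2 * V))
  rw [ha4]
  rw [ha3] at h6
  have h7 : a ^ 8 * a ^ 4 ≤ a ^ 8 * (16 * V) := by nlinarith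
  have h8 := le_of_mul_le_mul_left h7 (by positivity)
  linarith
end

section
/- There exists an absolute constant A > 0 such that for every set P of m points and every set L of n lines in ℝ², the number of pairs (p,ℓ) ∈ P × L with d(p,ℓ) = 1 is at most A · ( m^{2/3} n^{2/3} + m + n ). -/
noncomputable section

abbrev Pt2 := EuclideanSpace ℝ (Fin 2)

/-- A line in the plane: the set of points `a + t • v` for a nonzero direction `v`. -/
def IsLine2 (l : Set Pt2) : Prop :=
  ∃ a v : Pt2, v ≠ 0 ∧ l = {x : Pt2 | ∃ t : ℝ, x = a + t • v}

open Classical Filter Topology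

abbrev Ed := (ℝ × ℝ) × (ℝ × ℝ) × (ℝ × ℝ)

def hh (e : Ed) (x : ℝ) : ℝ := e.1.1 * x + e.1.2

structure Good (V : Finset (ℝ × ℝ)) (e : Ed) : Prop where
  lV : e.2.1 ∈ V
  rV : e.2.2 ∈ V
  lt : e.2.1.1 < e.2.2.1
  lon : e.2.1.2 = hh e e.2.1.1
  ron : e.2.2.2 = hh e e.2.2.1
  non : ∀ r ∈ V, e.2.1.1 < r.1 → r.1 < e.2.2.1 → r.2 ≠ hh e r.1

def Crosses (e f : Ed) : Prop :=
  ∃ x, e.2.1.1 < x ∧ x < e.2.2.1 ∧ f.2.1.1 < x ∧ x < f.2.2.1 ∧ hh e x = hh f x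

lemma hh_cont (e : Ed) : Continuous (hh e) := by
  unfold hh; fun_prop

lemma weak_end (e f : Ed) (s x : ℝ) (hs : s < x)
    (hne : ∀ y, s < y → y ≤ x → hh e y ≠ hh f y) (hx : hh e x < hh f x) :
    hh e s ≤ hh f s := by
  by_contra hc
  push Not at hc
  have h1 : ContinuousOn (fun y => hh f y - hh e y) (Set.Icc s x) :=
    ((hh_cont f).sub (hh_cont e)).continuousOn
  have h2 := intermediate_value_Ioo hs.le h1
  have h3 : (0:ℝ) ∈ Set.Ioo (hh f s - hh e s) (hh f x - hh e x) := by
    constructor <;> linarith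
  obtain ⟨y, hy, hy0⟩ := h2 h3
  exact hne y hy.1 hy.2.le (by simp only at hy0; linarith)

structure Succ3 (V : Finset (ℝ × ℝ)) (E : Finset Ed) (e g : Ed) (w : ℝ × ℝ) : Prop where
  gE : g ∈ E
  left : g.2.1 = e.2.1
  slope : e.1.1 < g.1.1
  btw : ∀ f ∈ E, f.2.1 = e.2.1 → e.1.1 < f.1.1 → f.1.1 < g.1.1 → False
  ws : e.2.1.1 < w.1
  wte : w.1 ≤ e.2.2.1
  wtg : w.1 ≤ g.2.2.1
  elo : hh e w.1 ≤ w.2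
  ghi : w.2 ≤ hh g w.1
  emp : ∀ r ∈ V, e.2.1.1 < r.1 → r.1 < w.1 → hh e r.1 ≤ r.2 → r.2 ≤ hh g r.1 → False

lemma lon_eq {V : Finset (ℝ × ℝ)} {e g : Ed} (he : Good V e) (hg : Good V g)
    (hl : g.2.1 = e.2.1) : hh e e.2.1.1 = hh g e.2.1.1 := by
  have h1 := he.lon
  have h2 := hg.lon
  rw [hl] at h2
  rw [← h1, ← h2]

lemma sandwich {V : Finset (ℝ × ℝ)} {E : Finset Ed} (hG : ∀ e ∈ E, Good V e)
    (hN : ∀ e ∈ E, ∀ f ∈ E, Crosses e f → e = f) {e g : Ed} {w : ℝ × ℝ} (he : e ∈ E)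
    (S : Succ3 V E e g w) {f : Ed} (hf : f ∈ E) {x : ℝ} (hx1 : e.2.1.1 < x) (hx2 : x < w.1)
    (hx3 : f.2.1.1 < x) (hx4 : x < f.2.2.1) (h1 : hh e x < hh f x) (h2 : hh f x < hh g x) :
    False := by
  have gG := hG g S.gE
  have eG := hG e he
  have fG := hG f hf
  have hl := S.left
  have hwe := S.wte
  have hwg := S.wtg
  have hgl : g.2.1.1 = e.2.1.1 := by rw [hl]
  have hs0 : max e.2.1.1 f.2.1.1 < x := max_lt hx1 hx3
  have k1 : hh e (max e.2.1.1 f.2.1.1) ≤ hh f (max e.2.1.1 f.2.1.1) := by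
    apply weak_end e f _ x hs0 _ h1
    intro y hy1 hy2 hy
    have := hN e he f hf ⟨y, lt_of_le_of_lt (le_max_left _ _) hy1, by linarith,
      lt_of_le_of_lt (le_max_right _ _) hy1, by linarith, hy⟩
    subst this
    exact lt_irrefl _ h1
  have k2 : hh f (max e.2.1.1 f.2.1.1) ≤ hh g (max e.2.1.1 f.2.1.1) := by
    apply weak_end f g _ x hs0 _ h2
    intro y hy1 hy2 hy
    have := hN f hf g S.gE ⟨y, lt_of_le_of_lt (le_max_right _ _) hy1, by linarith, by
      rw [hgl]; exact lt_of_le_of_lt (le_max_left _ _) hy1, by linarith, hy⟩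
    subst this
    exact lt_irrefl _ h2
  have k0 := lon_eq eG gG hl
  rcases lt_or_ge e.2.1.1 f.2.1.1 with hc | hc
  · rw [max_eq_right hc.le] at k1 k2
    refine S.emp f.2.1 fG.lV hc (by linarith) ?_ ?_
    · rw [fG.lon]; exact k1
    · rw [fG.lon]; exact k2
  · rw [max_eq_left hc] at k1 k2
    have k3 : hh f e.2.1.1 = hh e e.2.1.1 := by linarith
    rcases hc.lt_or_eq with hc | hc
    · exact fG.non e.2.1 eG.lV hc (by linarith) (by rw [k3]; exact eG.lon)
    · have hfl : f.2.1 = e.2.1 := by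
        apply Prod.ext hc
        rw [fG.lon, eG.lon, hc, k3]
      unfold hh at *
      refine S.btw f hf hfl ?_ ?_
      · by_contra hcc
        push Not at hcc
        nlinarith
      · by_contra hcc
        push Not at hcc
        nlinarith

lemma hh_ev_lt (e f : Ed) (X : ℝ) (h : hh e X < hh f X) : ∀ᶠ x in 𝓝[<] X, hh e x < hh f x :=
  ((hh_cont e).continuousAt.eventually_lt (hh_cont f).continuousAt h).filter_mono
    nhdsWithin_le_nhds

lemma same_left {V : Finset (ℝ × ℝ)} {E : Finset Ed} (hG : ∀ e ∈ E, Good V e)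
    (hN : ∀ e ∈ E, ∀ f ∈ E, Crosses e f → e = f) {e f : Ed} (he : e ∈ E) (hf : f ∈ E)
    (hl : f.2.1 = e.2.1) (hs : e.1.1 = f.1.1) : e = f := by
  have k := lon_eq (hG e he) (hG f hf) hl
  have h1 := (hG e he).lt
  have h2 := (hG f hf).lt
  obtain ⟨x, hx1, hx2⟩ := exists_between (lt_min h1 (by rw [hl] at h2; exact h2))
  refine hN e he f hf ⟨x, hx1, hx2.trans_le (min_le_left _ _), by rw [hl]; exact hx1,
    hx2.trans_le (min_le_right _ _), ?_⟩
  unfold hh at *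
  rw [hs] at k ⊢
  linarith

lemma slope_lt {V : Finset (ℝ × ℝ)} {e g : Ed} (he : Good V e) (hg : Good V g)
    (hl : g.2.1 = e.2.1) (hs : e.1.1 < g.1.1) {x : ℝ} (hx : e.2.1.1 < x) : hh e x < hh g x := by
  have k := lon_eq he hg hl
  unfold hh at *
  nlinarith

lemma planar (V : Finset (ℝ × ℝ)) (E : Finset Ed) (hG : ∀ e ∈ E, Good V e)
    (hN : ∀ e ∈ E, ∀ f ∈ E, Crosses e f → e = f) : E.card ≤ 3 * V.card := by
  set E0 := E.filter (fun e => ∀ f ∈ E, f.2.1 = e.2.1 → f.1.1 ≤ e.1.1)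
  set EA := E.filter (fun e => ∃ w ∈ V, ∃ g, Succ3 V E e g w ∧ w.2 < hh g w.1)
  set EB := E.filter (fun e => ∃ w ∈ V, ∃ g, Succ3 V E e g w ∧ w.2 = hh g w.1)
  have hsub : E ⊆ E0 ∪ (EA ∪ EB) := by
    intro e he
    simp only [Finset.mem_union, E0, EA, EB, Finset.mem_filter, he, true_and]
    by_cases h0 : ∀ f ∈ E, f.2.1 = e.2.1 → f.1.1 ≤ e.1.1
    · exact Or.inl h0
    right
    push Not at h0
    obtain ⟨f0, hf0, hf0l, hf0s⟩ := h0
    obtain ⟨g, hg, hgm⟩ := Finset.exists_min_image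
      (E.filter (fun f => f.2.1 = e.2.1 ∧ e.1.1 < f.1.1)) (fun f => f.1.1)
      ⟨f0, by simp [hf0, hf0l, hf0s]⟩
    simp only [Finset.mem_filter] at hg hgm
    obtain ⟨hgE, hgl, hgs⟩ := hg
    have eG := hG e he
    have gG := hG g hgE
    have hglt := gG.lt
    rw [hgl] at hglt
    have hne : (V.filter (fun w => e.2.1.1 < w.1 ∧ w.1 ≤ e.2.2.1 ∧ w.1 ≤ g.2.2.1 ∧
      hh e w.1 ≤ w.2 ∧ w.2 ≤ hh g w.1)).Nonempty := by
      rcases le_total e.2.2.1 g.2.2.1 with h | h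
      · refine ⟨e.2.2, ?_⟩
        simp only [Finset.mem_filter]
        exact ⟨eG.rV, eG.lt, le_rfl, h, eG.ron.ge, by
          rw [eG.ron]; exact (slope_lt eG gG hgl hgs eG.lt).le⟩
      · refine ⟨g.2.2, ?_⟩
        simp only [Finset.mem_filter]
        exact ⟨gG.rV, hglt, h, le_rfl, by
          rw [gG.ron]; exact (slope_lt eG gG hgl hgs hglt).le, gG.ron.le⟩
    obtain ⟨w, hw, hwm⟩ := Finset.exists_min_image _ (fun w : ℝ × ℝ => w.1) hne
    simp only [Finset.mem_filter] at hw hwm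
    obtain ⟨hwV, w1, w2, w3, w4, w5⟩ := hw
    have S : Succ3 V E e g w := by
      refine ⟨hgE, hgl, hgs, ?_, w1, w2, w3, w4, w5, ?_⟩
      · intro f hf hfl h1 h2
        exact absurd (hgm f ⟨hf, hfl, h1⟩) (not_le.2 h2)
      · intro r hr r1 r2 r3 r4
        exact absurd (hwm r ⟨hr, r1, by linarith, by linarith, r3, r4⟩) (not_le.2 r2)
    rcases w5.lt_or_eq with h | h
    · exact Or.inl ⟨w, hwV, g, S, h⟩
    · exact Or.inr ⟨w, hwV, g, S, h⟩
  have c0 : E0.card ≤ V.card := by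
    apply Finset.card_le_card_of_forall_subsingleton (fun e v => e.2.1 = v)
    · intro e he
      simp only [E0, Finset.mem_filter] at he
      exact ⟨_, (hG e he.1).lV, rfl⟩
    · rintro v - e ⟨he, hev⟩ f ⟨hf, hfv⟩
      simp only [E0, Finset.mem_filter] at he hf hev hfv
      have hl : f.2.1 = e.2.1 := by rw [hev, hfv]
      exact same_left hG hN he.1 hf.1 hl (le_antisymm (hf.2 e he.1 hl.symm) (he.2 f hf.1 hl))
  have cA : EA.card ≤ V.card := by
    apply Finset.card_le_card_of_forall_subsingleton
      (fun e w => ∃ g, Succ3 V E e g w ∧ w.2 < hh g w.1)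
    · intro e he
      simp only [EA, Finset.mem_filter] at he
      exact he.2
    · rintro w - e ⟨he, g, S, hg⟩ e' ⟨he', g', S', hg'⟩
      simp only [EA, Finset.mem_filter] at he he'
      have e1 := hh_ev_lt e' g w.1 (S'.elo.trans_lt hg)
      have e2 := hh_ev_lt e g' w.1 (S.elo.trans_lt hg')
      have e3 : ∀ᶠ x in 𝓝[<] w.1, x ∈ Set.Ioo (max e.2.1.1 e'.2.1.1) w.1 :=
        Ioo_mem_nhdsLT (max_lt S.ws S'.ws)
      obtain ⟨x, x1, x2, x3⟩ := (e1.and (e2.and e3)).exists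
      obtain ⟨x4, x5⟩ := max_lt_iff.1 x3.1
      have x6 := x3.2
      have y1 := x6.trans_le S.wte
      have y2 := x6.trans_le S'.wte
      rcases lt_trichotomy (hh e x) (hh e' x) with h | h | h
      · exact (sandwich hG hN he.1 S he'.1 x4 x6 x5 y2 h x1).elim
      · exact hN e he.1 e' he'.1 ⟨x, x4, y1, x5, y2, h⟩
      · exact (sandwich hG hN he'.1 S' he.1 x5 x6 x4 y1 h x2).elim
  have cB : EB.card ≤ V.card := by
    apply Finset.card_le_card_of_forall_subsingleton
      (fun e w => ∃ g, Succ3 V E e g w ∧ w.2 = hh g w.1)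
    · intro e he
      simp only [EB, Finset.mem_filter] at he
      exact he.2
    · rintro w - e ⟨he, g, S, hg⟩ e' ⟨he', g', S', hg'⟩
      simp only [EB, Finset.mem_filter] at he he'
      have s1 := slope_lt (hG e he.1) (hG g S.gE) S.left S.slope S.ws
      have s2 := slope_lt (hG e' he'.1) (hG g' S'.gE) S'.left S'.slope S'.ws
      have e1 := hh_ev_lt e' g w.1 (by linarith)
      have e2 := hh_ev_lt e g' w.1 (by linarith)
      have e3 : ∀ᶠ x in 𝓝[<] w.1, x ∈ Set.Ioo (max e.2.1.1 e'.2.1.1) w.1 :=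
        Ioo_mem_nhdsLT (max_lt S.ws S'.ws)
      obtain ⟨x, x1, x2, x3⟩ := (e1.and (e2.and e3)).exists
      obtain ⟨x4, x5⟩ := max_lt_iff.1 x3.1
      have x6 := x3.2
      have y1 := x6.trans_le S.wtg
      have y2 := x6.trans_le S'.wtg
      have z1 : g.2.1.1 < x := by rw [S.left]; exact x4
      have z2 : g'.2.1.1 < x := by rw [S'.left]; exact x5
      rcases lt_trichotomy (hh g x) (hh g' x) with h | h | h
      · exact (sandwich hG hN he'.1 S' S.gE x5 x6 z1 y1 x1 h).elim
      · have hgg := hN g S.gE g' S'.gE ⟨x, z1, y1, z2, y2, h⟩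
        subst hgg
        have hl : e'.2.1 = e.2.1 := by rw [← S.left, ← S'.left]
        refine same_left hG hN he.1 he'.1 hl ?_
        rcases lt_trichotomy e.1.1 e'.1.1 with q | q | q
        · exact (S.btw e' he'.1 hl q S'.slope).elim
        · exact q
        · exact (S'.btw e he.1 hl.symm q S.slope).elim
      · exact (sandwich hG hN he.1 S S'.gE x4 x6 z2 y2 x2 h).elim
  have := Finset.card_le_card hsub
  have := Finset.card_union_le E0 (EA ∪ EB)
  have := Finset.card_union_le EA EB
  omega

lemma planar_cross (V : Finset (ℝ × ℝ)) (E : Finset Ed) (hG : ∀ e ∈ E, Good V e) :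
    E.card ≤ 3 * V.card + ((E ×ˢ E).filter (fun q => q.1 ≠ q.2 ∧ Crosses q.1 q.2)).card := by
  set X := (E ×ˢ E).filter (fun q => q.1 ≠ q.2 ∧ Crosses q.1 q.2) with hX
  have h1 : (E \ X.image Prod.fst).card ≤ 3 * V.card := by
    apply planar
    · intro e he
      exact hG e (Finset.mem_sdiff.1 he).1
    · intro e he f hf hc
      by_contra hne
      refine (Finset.mem_sdiff.1 he).2 (Finset.mem_image.2 ⟨(e, f), ?_, rfl⟩)
      rw [hX, Finset.mem_filter, Finset.mem_product]
      exact ⟨⟨(Finset.mem_sdiff.1 he).1, (Finset.mem_sdiff.1 hf).1⟩, hne, hc⟩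
  have h2 : (X.image Prod.fst).card ≤ X.card := Finset.card_image_le
  have h3 := Finset.le_card_sdiff (X.image Prod.fst) E
  omega

def wt (p : ℝ) (V S : Finset (ℝ × ℝ)) : ℝ := p ^ S.card * (1 - p) ^ (V \ S).card

lemma wt_sum (p : ℝ) (V T : Finset (ℝ × ℝ)) (hT : T ⊆ V) :
    ∑ S ∈ V.powerset, wt p V S * (if T ⊆ S then 1 else 0) = p ^ T.card := by
  have h := Finset.prod_add (fun _ : ℝ × ℝ => p) (fun i => if i ∈ T then 0 else 1 - p) V
  have h1 : ∏ i ∈ V, (p + if i ∈ T then 0 else 1 - p) = p ^ T.card := by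
    have : ∀ i ∈ V, (p + if i ∈ T then 0 else 1 - p) = if i ∈ T then p else 1 := by
      intro i _
      split_ifs <;> ring
    rw [Finset.prod_congr rfl this, Finset.prod_ite_mem, Finset.inter_eq_right.2 hT,
      Finset.prod_const]
  rw [← h1, h]
  refine Finset.sum_congr rfl fun S hS => ?_
  rw [Finset.prod_const]
  unfold wt
  rw [mul_assoc]
  congr 1
  by_cases hTS : T ⊆ S
  · rw [if_pos hTS, mul_one, ← Finset.prod_const]
    refine Finset.prod_congr rfl fun i hi => ?_
    rw [if_neg]
    exact fun hc => (Finset.mem_sdiff.1 hi).2 (hTS hc)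
  · rw [if_neg hTS, mul_zero]
    obtain ⟨i, hi, hiS⟩ := Finset.not_subset.1 hTS
    rw [Finset.prod_eq_zero (Finset.mem_sdiff.2 ⟨hT hi, hiS⟩)]
    rw [if_pos hi]

lemma wt_card {α : Type*} (p : ℝ) (V : Finset (ℝ × ℝ)) (F : Finset α)
    (T : α → Finset (ℝ × ℝ)) (k : ℕ) (hT : ∀ a ∈ F, T a ⊆ V) (hk : ∀ a ∈ F, (T a).card = k) :
    ∑ S ∈ V.powerset, wt p V S * ((F.filter (fun a => T a ⊆ S)).card : ℝ) = p ^ k * F.card := by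
  have : ∀ S, wt p V S * ((F.filter (fun a => T a ⊆ S)).card : ℝ) =
      ∑ a ∈ F, wt p V S * (if T a ⊆ S then 1 else 0) := by
    intro S
    rw [Finset.card_filter, ← Finset.mul_sum]
    push_cast
    rfl
  simp_rw [this]
  rw [Finset.sum_comm, Finset.sum_congr rfl (fun a ha => by
    rw [wt_sum p V (T a) (hT a ha), hk a ha]), Finset.sum_const, nsmul_eq_mul, mul_comm]

lemma line_eq_s19 {e f : Ed} {x y : ℝ} (hxy : x < y) (h1 : hh e x = hh f x) (h2 : hh e y = hh f y) :
    e.1 = f.1 := by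
  unfold hh at *
  have h3 : (e.1.1 - f.1.1) * (y - x) = 0 := by linarith
  have h4 : e.1.1 = f.1.1 := by
    rcases mul_eq_zero.1 h3 with h | h <;> linarith
  refine Prod.ext h4 ?_
  rw [h4] at h1
  linarith

lemma same_line {V : Finset (ℝ × ℝ)} {e f : Ed} (he : Good V e) (hf : Good V f) (hl : e.1 = f.1)
    {x : ℝ} (h1 : e.2.1.1 < x) (h2 : x < e.2.2.1) (h3 : f.2.1.1 < x) (h4 : x < f.2.2.1) :
    e = f := by
  have hfun : ∀ y, hh e y = hh f y := fun y => by unfold hh; rw [hl]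
  have a1 : e.2.1.1 = f.2.1.1 := by
    rcases lt_trichotomy e.2.1.1 f.2.1.1 with h | h | h
    · exact (he.non _ hf.lV h (by linarith) (by rw [hfun]; exact hf.lon)).elim
    · exact h
    · exact (hf.non _ he.lV h (by linarith) (by rw [← hfun]; exact he.lon)).elim
  have a2 : e.2.2.1 = f.2.2.1 := by
    rcases lt_trichotomy e.2.2.1 f.2.2.1 with h | h | h
    · exact (hf.non _ he.rV (by linarith) h (by rw [← hfun]; exact he.ron)).elim
    · exact h
    · exact (he.non _ hf.rV (by linarith) h (by rw [hfun]; exact hf.ron)).elim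
  refine Prod.ext hl (Prod.ext (Prod.ext a1 ?_) (Prod.ext a2 ?_))
  · rw [he.lon, hf.lon, a1, hfun]
  · rw [he.ron, hf.ron, a2, hfun]

lemma four {V : Finset (ℝ × ℝ)} {e f : Ed} (he : Good V e) (hf : Good V f) (hne : e ≠ f)
    (hc : Crosses e f) : ({e.2.1, e.2.2, f.2.1, f.2.2} : Finset (ℝ × ℝ)).card = 4 := by
  obtain ⟨x, h1, h2, h3, h4, h5⟩ := hc
  have hl : e.1 ≠ f.1 := fun h => hne (same_line he hf h h1 h2 h3 h4)
  have n1 : e.2.1 ≠ e.2.2 := fun h => by have := he.lt; rw [h] at this; exact lt_irrefl _ this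
  have n2 : f.2.1 ≠ f.2.2 := fun h => by have := hf.lt; rw [h] at this; exact lt_irrefl _ this
  have n3 : e.2.1 ≠ f.2.2 := fun h => by rw [h] at h1; linarith
  have n4 : e.2.2 ≠ f.2.1 := fun h => by rw [h] at h2; linarith
  have n5 : e.2.1 ≠ f.2.1 := fun h => hl (line_eq_s19 h1 (lon_eq he hf h.symm) h5)
  have n6 : e.2.2 ≠ f.2.2 := fun h => hl (line_eq_s19 h2 h5 (by
    rw [← he.ron, h, hf.ron]))
  rw [Finset.card_insert_of_notMem, Finset.card_insert_of_notMem, Finset.card_pair n2]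
  · simp [n4, n6]
  · simp [n1, n3, n5]

lemma crossing_ineq (V : Finset (ℝ × ℝ)) (E : Finset Ed) (hG : ∀ e ∈ E, Good V e)
    (p : ℝ) (hp0 : 0 ≤ p) (hp1 : p ≤ 1) :
    p ^ 2 * E.card ≤ 3 * (p * V.card) +
      p ^ 4 * ((E ×ˢ E).filter (fun q => q.1 ≠ q.2 ∧ Crosses q.1 q.2)).card := by
  set X := (E ×ˢ E).filter (fun q => q.1 ≠ q.2 ∧ Crosses q.1 q.2) with hX
  have key : ∀ S ∈ V.powerset,
      ((E.filter (fun e => ({e.2.1, e.2.2} : Finset (ℝ × ℝ)) ⊆ S)).card : ℝ) ≤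
      3 * ((V.filter (fun v => ({v} : Finset (ℝ × ℝ)) ⊆ S)).card : ℝ) +
      ((X.filter (fun q => ({q.1.2.1, q.1.2.2, q.2.2.1, q.2.2.2} : Finset (ℝ × ℝ)) ⊆ S)).card : ℝ)
      := by
    intro S hS
    rw [Finset.mem_powerset] at hS
    have hVS : V.filter (fun v => ({v} : Finset (ℝ × ℝ)) ⊆ S) = S := by
      ext v
      simp only [Finset.mem_filter, Finset.singleton_subset_iff]
      exact ⟨fun h => h.2, fun h => ⟨hS h, h⟩⟩
    rw [hVS]
    set ES := E.filter (fun e => ({e.2.1, e.2.2} : Finset (ℝ × ℝ)) ⊆ S) with hES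
    have h1 := planar_cross S ES (by
      intro e he
      rw [hES, Finset.mem_filter] at he
      obtain ⟨he, hs⟩ := he
      have g := hG e he
      exact ⟨hs (by simp), hs (by simp), g.lt, g.lon, g.ron, fun r hr => g.non r (hS hr)⟩)
    have h2 : ((ES ×ˢ ES).filter (fun q => q.1 ≠ q.2 ∧ Crosses q.1 q.2)).card ≤
        (X.filter (fun q => ({q.1.2.1, q.1.2.2, q.2.2.1, q.2.2.2} : Finset (ℝ × ℝ)) ⊆ S)).card := by
      apply Finset.card_le_card
      intro q hq
      simp only [hX, hES, Finset.mem_filter, Finset.mem_product, Finset.insert_subset_iff,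
        Finset.singleton_subset_iff] at hq ⊢
      tauto
    exact_mod_cast h1.trans (by omega)
  have hw : ∀ S ∈ V.powerset, 0 ≤ wt p V S := fun S _ =>
    mul_nonneg (pow_nonneg hp0 _) (pow_nonneg (by linarith) _)
  have tot := Finset.sum_le_sum (fun S hS => mul_le_mul_of_nonneg_left (key S hS) (hw S hS))
  simp_rw [mul_add] at tot
  rw [Finset.sum_add_distrib] at tot
  simp_rw [mul_left_comm (wt p V _) (3:ℝ)] at tot
  rw [← Finset.mul_sum] at tot
  rw [wt_card p V E (fun e => {e.2.1, e.2.2}) 2, wt_card p V V (fun v => {v}) 1,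
    wt_card p V X (fun q => {q.1.2.1, q.1.2.2, q.2.2.1, q.2.2.2}) 4, pow_one] at tot
  · exact tot
  · intro q hq
    simp only [hX, Finset.mem_filter, Finset.mem_product] at hq
    have g1 := hG _ hq.1.1
    have g2 := hG _ hq.1.2
    simp [Finset.insert_subset_iff, g1.lV, g1.rV, g2.lV, g2.rV]
  · intro q hq
    simp only [hX, Finset.mem_filter, Finset.mem_product] at hq
    exact four (hG _ hq.1.1) (hG _ hq.1.2) hq.2.1 hq.2.2
  · intro v hv
    simpa using hv
  · intro v hv
    simp
  · intro e he
    have g1 := hG _ he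
    simp [Finset.insert_subset_iff, g1.lV, g1.rV]
  · intro e he
    apply Finset.card_pair
    intro h
    have := (hG e he).lt
    rw [h] at this
    exact lt_irrefl _ this

def incs (P L : Finset (ℝ × ℝ)) : Finset ((ℝ × ℝ) × (ℝ × ℝ)) :=
  (P ×ˢ L).filter (fun q => q.1.2 = q.2.1 * q.1.1 + q.2.2)

lemma inc_ineq (P L : Finset (ℝ × ℝ)) (p : ℝ) (hp0 : 0 ≤ p) (hp1 : p ≤ 1) :
    p ^ 2 * ((incs P L).card - L.card : ℝ) ≤ 3 * (p * P.card) + p ^ 4 * (L.card : ℝ) ^ 2 := by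
  set E : Finset Ed := (L ×ˢ (P ×ˢ P)).filter (fun e => Good P e) with hE
  have hG : ∀ e ∈ E, Good P e := fun e he => (Finset.mem_filter.1 he).2
  have h1 := crossing_ineq P E hG p hp0 hp1
  set X := (E ×ˢ E).filter (fun q => q.1 ≠ q.2 ∧ Crosses q.1 q.2) with hX
  have hXc : X.card ≤ (L ×ˢ L).card := by
    apply Finset.card_le_card_of_injOn (fun q => (q.1.1, q.2.1))
    · intro q hq
      simp only [hX, hE, Finset.coe_filter, Finset.mem_product, Finset.mem_filter,
        Set.mem_ofPred_eq] at hq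
      simp [hq.1.1.1.1, hq.1.2.1.1]
    · rintro ⟨e, f⟩ hq ⟨e', f'⟩ hq' heq
      simp only [hX, Finset.coe_filter, Finset.mem_product, Set.mem_ofPred_eq, Prod.mk.injEq]
        at hq hq' heq
      obtain ⟨⟨he, hf⟩, hne, x, a1, a2, a3, a4, a5⟩ := hq
      obtain ⟨⟨he', hf'⟩, hne', x', b1, b2, b3, b4, b5⟩ := hq'
      have hl : e.1 ≠ f.1 := fun h => hne (same_line (hG e he) (hG f hf) h a1 a2 a3 a4)
      have hxx : x = x' := by
        have c5 : hh e x' = hh f x' := by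
          unfold hh at *
          rw [heq.1, heq.2]; exact b5
        rcases lt_trichotomy x x' with h | h | h
        · exact (hl (line_eq_s19 h a5 c5)).elim
        · exact h
        · exact (hl (line_eq_s19 h c5 a5)).elim
      subst hxx
      rw [same_line (hG e he) (hG e' he') heq.1 a1 a2 b1 b2,
        same_line (hG f hf) (hG f' hf') heq.2 a3 a4 b3 b4]
  have hI : (incs P L).card ≤ E.card + L.card := by
    set I1 := (incs P L).filter (fun q => ∃ e ∈ E, e.1 = q.2 ∧ e.2.1 = q.1)
    set I2 := (incs P L).filter (fun q => ¬ ∃ e ∈ E, e.1 = q.2 ∧ e.2.1 = q.1)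
    have hs : I1.card + I2.card = (incs P L).card := Finset.card_filter_add_card_filter_not _
    have c1 : I1.card ≤ E.card := by
      apply Finset.card_le_card_of_forall_subsingleton (fun q e => e.1 = q.2 ∧ e.2.1 = q.1)
      · intro q hq
        exact (Finset.mem_filter.1 hq).2
      · rintro e - q ⟨-, hq1, hq2⟩ q' ⟨-, hq1', hq2'⟩
        exact Prod.ext (by rw [← hq2, ← hq2']) (by rw [← hq1, ← hq1'])
    have c2 : I2.card ≤ L.card := by
      apply Finset.card_le_card_of_injOn Prod.snd
      · intro q hq
        simp only [I2, incs, Finset.coe_filter, Finset.mem_filter, Finset.mem_product,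
          Set.mem_ofPred_eq] at hq
        exact hq.1.1.2
      · have main : ∀ q ∈ I2, ∀ r ∈ I2, q.2 = r.2 → q.1.1 < r.1.1 → False := by
          intro q hq r hr hqr hlt
          simp only [I2, incs, Finset.mem_filter, Finset.mem_product] at hq hr
          obtain ⟨⟨⟨hqP, hqL⟩, hqi⟩, hqn⟩ := hq
          obtain ⟨⟨⟨hrP, hrL⟩, hri⟩, -⟩ := hr
          obtain ⟨z, hz, hzm⟩ := Finset.exists_min_image
            (P.filter (fun z => q.1.1 < z.1 ∧ z.2 = q.2.1 * z.1 + q.2.2)) (fun z => z.1)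
            ⟨r.1, by simp only [Finset.mem_filter]; exact ⟨hrP, hlt, by rw [hqr]; exact hri⟩⟩
          simp only [Finset.mem_filter] at hz hzm
          refine hqn ⟨(q.2, q.1, z), ?_, rfl, rfl⟩
          rw [hE, Finset.mem_filter]
          refine ⟨by simp [hqL, hqP, hz.1], ⟨hqP, hz.1, hz.2.1, hqi, hz.2.2, ?_⟩⟩
          intro t ht t1 t2 t3
          exact absurd (hzm t ⟨ht, t1, t3⟩) (not_le.2 t2)
        intro q hq r hr hqr
        rcases lt_trichotomy q.1.1 r.1.1 with h | h | h
        · exact (main q hq r hr hqr h).elim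
        · refine Prod.ext (Prod.ext h ?_) hqr
          simp only [I2, incs, Finset.coe_filter, Finset.mem_filter, Set.mem_ofPred_eq] at hq hr
          rw [hq.1.2, hr.1.2, h]
          replace hqr : q.2 = r.2 := hqr
          rw [hqr]
        · exact (main r hr q hq hqr.symm h).elim
    omega
  have hI' : ((incs P L).card : ℝ) ≤ E.card + L.card := by exact_mod_cast hI
  have hX' : (X.card : ℝ) ≤ (L.card : ℝ) ^ 2 := by
    rw [Finset.card_product] at hXc
    rw [sq]; exact_mod_cast hXc
  calc p ^ 2 * ((incs P L).card - L.card : ℝ) ≤ p ^ 2 * E.card :=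
        mul_le_mul_of_nonneg_left (by linarith) (by positivity)
    _ ≤ _ := h1
    _ ≤ _ := by gcongr

lemma szt (P L : Finset (ℝ × ℝ)) :
    ((incs P L).card : ℝ) ≤ 4 * ((P.card : ℝ) ^ ((2:ℝ)/3) * (L.card : ℝ) ^ ((2:ℝ)/3))
      + 4 * P.card + L.card := by
  rcases Nat.eq_zero_or_pos P.card with h0 | hm
  · have : incs P L = ∅ := by
      rw [Finset.card_eq_zero] at h0
      simp [incs, h0]
    rw [this]
    simp only [Finset.card_empty, Nat.cast_zero]
    positivity
  have hm' : (0:ℝ) < P.card := by exact_mod_cast hm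
  have hineq := inc_ineq P L
  generalize ((incs P L).card : ℝ) = I at *
  generalize (P.card : ℝ) = m at *
  have hn0 : (0:ℝ) ≤ L.card := by positivity
  generalize (L.card : ℝ) = n at *
  have hpos : 0 ≤ m ^ ((2:ℝ)/3) * n ^ ((2:ℝ)/3) := by positivity
  rcases le_total (n ^ 2) m with h | h
  · have := hineq 1 zero_le_one le_rfl
    linarith
  · have hn : 0 < n := by
      rcases hn0.lt_or_eq with h' | h'
      · exact h'
      · rw [← h'] at h; norm_num at h; linarith
    set a := m ^ ((1:ℝ)/3) with ha
    set b := n ^ ((1:ℝ)/3) with hb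
    have ha0 : 0 < a := by positivity
    have hb0 : 0 < b := by positivity
    have ha3 : m = a ^ 3 := by
      rw [ha, ← Real.rpow_natCast, ← Real.rpow_mul hm'.le]; norm_num
    have hb3 : n = b ^ 3 := by
      rw [hb, ← Real.rpow_natCast, ← Real.rpow_mul hn.le]; norm_num
    have ha2 : m ^ ((2:ℝ)/3) = a ^ 2 := by
      rw [ha, ← Real.rpow_natCast, ← Real.rpow_mul hm'.le]; norm_num
    have hb2 : n ^ ((2:ℝ)/3) = b ^ 2 := by
      rw [hb, ← Real.rpow_natCast, ← Real.rpow_mul hn.le]; norm_num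
    have hab : a ≤ b ^ 2 := by
      refine le_of_pow_le_pow_left₀ (n := 3) (by norm_num) (by positivity) ?_
      rw [ha3, hb3] at h
      calc a ^ 3 ≤ (b ^ 3) ^ 2 := h
        _ = (b ^ 2) ^ 3 := by ring
    have := hineq (a / b ^ 2) (by positivity) ((div_le_one (by positivity)).2 hab)
    rw [ha2, hb2]
    clear_value a b
    subst ha3 hb3
    have e1 : (a / b ^ 2) ^ 2 * (I - b ^ 3) * (b ^ 4 / a ^ 2) = I - b ^ 3 := by
      field_simp
    have e2 : (3 * (a / b ^ 2 * a ^ 3) + (a / b ^ 2) ^ 4 * (b ^ 3) ^ 2) * (b ^ 4 / a ^ 2)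
        = 4 * (a ^ 2 * b ^ 2) := by
      field_simp
      ring
    have e3 := mul_le_mul_of_nonneg_right this (show 0 ≤ b ^ 4 / a ^ 2 by positivity)
    rw [e1, e2] at e3
    have : 0 < a ^ 3 := by positivity
    linarith

def NV (l : Set Pt2) (ab : ℝ × ℝ) : Prop := l = {x : Pt2 | x 1 = ab.1 * x 0 + ab.2}

def VT (l : Set Pt2) (c : ℝ) : Prop := l = {x : Pt2 | x 0 = c}

lemma line_cases (l : Set Pt2) (hl : IsLine2 l) : (∃ ab, NV l ab) ∨ ∃ c, VT l c := by
  obtain ⟨a, v, hv, rfl⟩ := hl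
  by_cases h0 : v 0 = 0
  · right
    have h1 : v 1 ≠ 0 := by
      intro h1
      apply hv
      ext i
      fin_cases i <;> simp [h0, h1]
    refine ⟨a 0, ?_⟩
    unfold VT
    ext x
    constructor
    · rintro ⟨t, rfl⟩
      simp [h0]
    · intro hx
      replace hx : x 0 = a 0 := hx
      refine ⟨(x 1 - a 1) / v 1, ?_⟩
      ext i
      fin_cases i
      · simp [h0, hx]
      · simp
        field_simp
        ring
  · left
    refine ⟨(v 1 / v 0, a 1 - v 1 / v 0 * a 0), ?_⟩
    unfold NV
    ext x
    constructor
    · rintro ⟨t, rfl⟩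
      show (a + t • v) 1 = v 1 / v 0 * (a + t • v) 0 + (a 1 - v 1 / v 0 * a 0)
      simp
      field_simp
      ring
    · intro hx
      replace hx : x 1 = v 1 / v 0 * x 0 + (a 1 - v 1 / v 0 * a 0) := hx
      refine ⟨(x 0 - a 0) / v 0, ?_⟩
      ext i
      fin_cases i
      · simp
        field_simp
        ring
      · simp [hx]
        field_simp
        ring

lemma dist2 (x y : Pt2) : dist x y ^ 2 = (x 0 - y 0) ^ 2 + (x 1 - y 1) ^ 2 := by
  rw [EuclideanSpace.dist_sq_eq]
  simp [Fin.sum_univ_two, Real.dist_eq]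

lemma infDist_char (l : Set Pt2) (p f : Pt2) (hf : f ∈ l) (h1 : Metric.infDist p l = 1)
    (hmin : ∀ y ∈ l, dist p f ^ 2 ≤ dist p y ^ 2) : dist p f ^ 2 = 1 := by
  have : Metric.infDist p l = dist p f := by
    apply le_antisymm (Metric.infDist_le_dist_of_mem hf)
    rw [Metric.le_infDist ⟨f, hf⟩]
    intro y hy
    exact le_of_sq_le_sq (hmin y hy) dist_nonneg
  rw [← this, h1, one_pow]

lemma nv_dist {l : Set Pt2} {ab : ℝ × ℝ} (h : NV l ab) {p : Pt2} (h1 : Metric.infDist p l = 1) :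
    p 1 = ab.1 * p 0 + (ab.2 + √(1 + ab.1 ^ 2)) ∨ p 1 = ab.1 * p 0 + (ab.2 - √(1 + ab.1 ^ 2)) := by
  obtain ⟨a, b⟩ := ab
  unfold NV at h
  have hD : 0 < 1 + a ^ 2 := by positivity
  obtain ⟨c, hc⟩ : ∃ c, c = p 1 - (a * p 0 + b) := ⟨_, rfl⟩
  obtain ⟨k, hk⟩ : ∃ k, k = c / (1 + a ^ 2) := ⟨_, rfl⟩
  have hkc : k * (1 + a ^ 2) = c := by rw [hk]; field_simp
  have hfl : (!₂[p 0 + k * a, p 1 - k] : Pt2) ∈ l := by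
    rw [h]
    show p 1 - k = a * (p 0 + k * a) + b
    linarith
  have hd : dist p (!₂[p 0 + k * a, p 1 - k] : Pt2) ^ 2 = k ^ 2 * (1 + a ^ 2) := by
    rw [dist2]; simp; ring
  have := infDist_char l p _ hfl h1 (by
    intro y hy
    rw [h] at hy
    replace hy : y 1 = a * y 0 + b := hy
    rw [hd, dist2, hy]
    have e1 : p 1 = k * (1 + a ^ 2) + (a * p 0 + b) := by linarith
    rw [e1]
    obtain ⟨u, hu⟩ : ∃ u, u = p 0 - y 0 := ⟨_, rfl⟩
    have : p 0 = y 0 + u := by linarith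
    rw [this]
    nlinarith [sq_nonneg (u * (1 + a ^ 2) + k * a * (1 + a ^ 2)), sq_nonneg (u + k * a),
      mul_nonneg hD.le (sq_nonneg (u + k * a))])
  rw [hd] at this
  have hs := Real.sq_sqrt hD.le
  have : (c - √(1 + a ^ 2)) * (c + √(1 + a ^ 2)) = 0 := by
    have : c ^ 2 = 1 + a ^ 2 := by
      rw [← hkc]
      calc (k * (1 + a ^ 2)) ^ 2 = (k ^ 2 * (1 + a ^ 2)) * (1 + a ^ 2) := by ring
        _ = _ := by rw [this, one_mul]
    nlinarith
  rcases mul_eq_zero.1 this with h | h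
  · left; show p 1 = a * p 0 + (b + √(1 + a ^ 2)); linarith
  · right; show p 1 = a * p 0 + (b - √(1 + a ^ 2)); linarith

lemma vt_dist {l : Set Pt2} {c : ℝ} (h : VT l c) {p : Pt2} (h1 : Metric.infDist p l = 1) :
    c = p 0 + 1 ∨ c = p 0 - 1 := by
  unfold VT at h
  have hfl : (!₂[c, p 1] : Pt2) ∈ l := by
    rw [h]
    show c = c
    rfl
  have hd : dist p (!₂[c, p 1] : Pt2) ^ 2 = (p 0 - c) ^ 2 := by
    rw [dist2]; simp
  have := infDist_char l p _ hfl h1 (by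
    intro y hy
    rw [h] at hy
    replace hy : y 0 = c := hy
    rw [hd, dist2, hy]
    nlinarith [sq_nonneg (p 1 - y 1)])
  rw [hd] at this
  have : (p 0 - c - 1) * (p 0 - c + 1) = 0 := by linarith
  rcases mul_eq_zero.1 this with h | h
  · right; linarith
  · left; linarith

def phi (p : Pt2) : ℝ × ℝ := (p 0, p 1)

lemma phi_inj : Function.Injective phi := by
  intro p q h
  simp only [phi, Prod.mk.injEq] at h
  ext i
  fin_cases i
  · exact h.1
  · exact h.2

lemma szt' (P : Finset Pt2) (L : Finset (Set Pt2)) (Q : Finset (Pt2 × Set Pt2)) (hQ : Q ⊆ P ×ˢ L)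
    (g : Set Pt2 → ℝ × ℝ)
    (hg : ∀ q ∈ Q, ∀ r ∈ Q, g q.2 = g r.2 → q.2 = r.2)
    (hi : ∀ q ∈ Q, q.1 1 = (g q.2).1 * q.1 0 + (g q.2).2) :
    (Q.card : ℝ) ≤ 4 * ((P.card : ℝ) ^ ((2:ℝ)/3) * (L.card : ℝ) ^ ((2:ℝ)/3))
      + 4 * P.card + L.card := by
  have h1 : Q.card ≤ (incs (P.image phi) (L.image g)).card := by
    apply Finset.card_le_card_of_injOn (fun q => (phi q.1, g q.2))
    · intro q hq
      have := Finset.mem_product.1 (hQ hq)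
      rw [Finset.mem_coe, incs, Finset.mem_filter, Finset.mem_product]
      exact ⟨⟨Finset.mem_image_of_mem _ this.1, Finset.mem_image_of_mem _ this.2⟩, hi q hq⟩
    · intro q hq r hr hqr
      simp only [Prod.mk.injEq] at hqr
      exact Prod.ext (phi_inj hqr.1) (hg q hq r hr hqr.2)
  have h2 := szt (P.image phi) (L.image g)
  have h3 : ((P.image phi).card : ℝ) ≤ P.card := by exact_mod_cast Finset.card_image_le
  have h4 : ((L.image g).card : ℝ) ≤ L.card := by exact_mod_cast Finset.card_image_le
  calc (Q.card : ℝ) ≤ (incs (P.image phi) (L.image g)).card := by exact_mod_cast h1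
    _ ≤ _ := h2
    _ ≤ _ := by gcongr

theorem repeated_point_line_distances :
    ∃ A : ℝ, 0 < A ∧
      ∀ (m n : ℕ) (P : Finset Pt2) (L : Finset (Set Pt2)),
        P.card = m → L.card = n → (∀ l ∈ L, IsLine2 l) →
        (({q : Pt2 × Set Pt2 | q.1 ∈ P ∧ q.2 ∈ L ∧ Metric.infDist q.1 q.2 = 1}).ncard : ℝ) ≤
          A * ((m : ℝ) ^ ((2 : ℝ) / 3) * (n : ℝ) ^ ((2 : ℝ) / 3) + (m : ℝ) + (n : ℝ)) := by
  refine ⟨10, by norm_num, ?_⟩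
  rintro m n P L rfl rfl hL
  set Q := (P ×ˢ L).filter (fun q => Metric.infDist q.1 q.2 = 1) with hQ
  have hset : {q : Pt2 × Set Pt2 | q.1 ∈ P ∧ q.2 ∈ L ∧ Metric.infDist q.1 q.2 = 1} = ↑Q := by
    ext q
    simp [hQ, and_assoc]
  rw [hset, Set.ncard_coe_finset]
  have hex : ∀ l : Set Pt2, ∃ ab, (∃ ab, NV l ab) → NV l ab := by
    intro l
    by_cases h : ∃ ab, NV l ab
    · obtain ⟨ab, h⟩ := h
      exact ⟨ab, fun _ => h⟩
    · exact ⟨0, fun h' => (h h').elim⟩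
  choose k hk using hex
  set QA := Q.filter (fun q => (∃ ab, NV q.2 ab) ∧
    q.1 1 = (k q.2).1 * q.1 0 + ((k q.2).2 + √(1 + (k q.2).1 ^ 2))) with hQA
  set QB := Q.filter (fun q => (∃ ab, NV q.2 ab) ∧
    q.1 1 = (k q.2).1 * q.1 0 + ((k q.2).2 - √(1 + (k q.2).1 ^ 2))) with hQB
  set QC := Q.filter (fun q => VT q.2 (q.1 0 + 1)) with hQC
  set QD := Q.filter (fun q => VT q.2 (q.1 0 - 1)) with hQD
  have hQs : Q ⊆ P ×ˢ L := Finset.filter_subset _ _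
  have hsub : Q ⊆ (QA ∪ QB) ∪ (QC ∪ QD) := by
    intro q hq
    have hq' := hq
    rw [hQ, Finset.mem_filter, Finset.mem_product] at hq'
    simp only [Finset.mem_union, hQA, hQB, hQC, hQD, Finset.mem_filter, hq, true_and]
    rcases line_cases q.2 (hL _ hq'.1.2) with h | ⟨c, h⟩
    · left
      rcases nv_dist (hk q.2 h) hq'.2 with h' | h'
      · exact Or.inl ⟨h, h'⟩
      · exact Or.inr ⟨h, h'⟩
    · right
      rcases vt_dist h hq'.2 with h' | h'
      · left; rwa [← h']
      · right; rwa [← h']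
  have cA := szt' P L QA ((Finset.filter_subset _ _).trans hQs)
    (fun l => ((k l).1, (k l).2 + √(1 + (k l).1 ^ 2))) (by
      intro q hq r hr h
      simp only [Prod.mk.injEq] at h
      have h1 : k q.2 = k r.2 := by
        refine Prod.ext h.1 ?_
        have := h.2
        rw [h.1] at this
        linarith
      have a1 := hk _ (Finset.mem_filter.1 hq).2.1
      have a2 := hk _ (Finset.mem_filter.1 hr).2.1
      rw [← h1] at a2
      exact a1.trans a2.symm) (fun q hq => (Finset.mem_filter.1 hq).2.2)
  have cB := szt' P L QB ((Finset.filter_subset _ _).trans hQs)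
    (fun l => ((k l).1, (k l).2 - √(1 + (k l).1 ^ 2))) (by
      intro q hq r hr h
      simp only [Prod.mk.injEq] at h
      have h1 : k q.2 = k r.2 := by
        refine Prod.ext h.1 ?_
        have := h.2
        rw [h.1] at this
        linarith
      have a1 := hk _ (Finset.mem_filter.1 hq).2.1
      have a2 := hk _ (Finset.mem_filter.1 hr).2.1
      rw [← h1] at a2
      exact a1.trans a2.symm) (fun q hq => (Finset.mem_filter.1 hq).2.2)
  have cC : QC.card ≤ P.card := by
    apply Finset.card_le_card_of_injOn Prod.fst
    · intro q hq
      exact (Finset.mem_product.1 (hQs (Finset.mem_filter.1 hq).1)).1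
    · intro q hq r hr h
      have a1 := (Finset.mem_filter.1 hq).2
      have a2 := (Finset.mem_filter.1 hr).2
      rw [← h] at a2
      exact Prod.ext h (a1.trans a2.symm)
  have cD : QD.card ≤ P.card := by
    apply Finset.card_le_card_of_injOn Prod.fst
    · intro q hq
      exact (Finset.mem_product.1 (hQs (Finset.mem_filter.1 hq).1)).1
    · intro q hq r hr h
      have a1 := (Finset.mem_filter.1 hq).2
      have a2 := (Finset.mem_filter.1 hr).2
      rw [← h] at a2
      exact Prod.ext h (a1.trans a2.symm)
  have u0 := Finset.card_le_card hsub
  have u1 := Finset.card_union_le (QA ∪ QB) (QC ∪ QD)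
  have u2 := Finset.card_union_le QA QB
  have u3 := Finset.card_union_le QC QD
  have u4 : Q.card ≤ QA.card + QB.card + P.card + P.card := by omega
  have u5 : (Q.card : ℝ) ≤ QA.card + QB.card + P.card + P.card := by exact_mod_cast u4
  have hpos : 0 ≤ (P.card : ℝ) ^ ((2:ℝ)/3) * (L.card : ℝ) ^ ((2:ℝ)/3) := by positivity
  have hn0 : (0:ℝ) ≤ L.card := by positivity
  linarith
end
end
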